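/- arXiv:1806.08483 — 8 statements merged into one kernel-verified Lean document; each statement's English description precedes it below -/
import Mathlib

section
/- Let n = 2m−1 be odd. For every g ∈ SU(2), the complex matrix R(g) of ρ_n(g) with respect to the ordered basis (u_{λ_0,n}, …, u_{λ_{m−1},n}, u_{−λ_0,n}, …, u_{−λ_{m−1},n}) of V_n satisfies J·R(g) = conj(R(g))·J, where J is the 2m×2m block matrix [[0, −I_m],[I_m, 0]] and conj denotes entrywise complex conjugation. -/
/-!
Write `n = 2m - 1`. The conjugate-linear ring endomorphism `S` of `ℂ[z₀, z₁]` that conjugates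
coefficients and substitutes `z₀ ↦ -z₁`, `z₁ ↦ z₀` is the quaternionic structure behind the
identity. It commutes with `ρ(g)` for `g ∈ SU(2)` (`structMap_rhoRep`), because `g⁻¹ = g*` is also
the adjugate of `g`; it turns the inner product into its conjugate (`innerVn_structMap`); and
`S² = (-1)ⁿ = -1` in degree `n` (`innerVn_structMap_structMap`). Since `u_{-λ_k} = i · S u_{λ_k}`
(`uBasis_inr`), the map `i · S` commutes with `ρ(g)` and acts on coordinate vectors by
`x ↦ J · conj x`, which is the claimed relation, read off block by block.
-/

open scoped BigOperators Matrix
open MvPolynomial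

/-- `v_{k,n} = z₀^k z₁^{n-k} / √(k!(n-k)!)`, with the convention that it is `0` if `k > n`. -/
noncomputable def vkn (n k : ℕ) : MvPolynomial (Fin 2) ℂ :=
  if k ≤ n then
    (((Real.sqrt ((k.factorial : ℝ) * ((n - k).factorial : ℝ)))⁻¹ : ℝ) : ℂ) •
      MvPolynomial.monomial (Finsupp.single 0 k + Finsupp.single 1 (n - k)) 1
  else 0

/-- The Hermitian inner product `(f, g) = ∑ k!(n-k)!·a_k·conj(b_k)` on `V_n`. -/
noncomputable def innerVn (n : ℕ) (f g : MvPolynomial (Fin 2) ℂ) : ℂ :=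
  ∑ k ∈ Finset.range (n + 1),
    ((k.factorial : ℂ) * ((n - k).factorial : ℂ)) *
      f.coeff (Finsupp.single 0 k + Finsupp.single 1 (n - k)) *
      (starRingEnd ℂ) (g.coeff (Finsupp.single 0 k + Finsupp.single 1 (n - k)))

/-- The substitution action `(ρ(g) f)(z₀, z₁) = f((z₀, z₁)·g⁻¹)`. -/
noncomputable def rhoRep (g : Matrix (Fin 2) (Fin 2) ℂ) (f : MvPolynomial (Fin 2) ℂ) :
    MvPolynomial (Fin 2) ℂ :=
  MvPolynomial.aeval (fun i : Fin 2 => ∑ j : Fin 2, g⁻¹ j i • MvPolynomial.X j) f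

/-- The ordered basis `(u_{λ_0,n}, …, u_{λ_{m−1},n}, u_{−λ_0,n}, …, u_{−λ_{m−1},n})` of
`V_{2m−1}`, where `u_{λ_k,n} = v_{k,n}` and `u_{−λ_k,n} = (−1)^k·i·v_{n−k,n}`. -/
noncomputable def uBasis (m : ℕ) : Fin m ⊕ Fin m → MvPolynomial (Fin 2) ℂ :=
  Sum.elim (fun k => vkn (2 * m - 1) (k : ℕ))
    (fun k => ((-1 : ℂ) ^ (k : ℕ) * Complex.I) • vkn (2 * m - 1) (2 * m - 1 - (k : ℕ)))

/-- The complex matrix of `ρ_n(g)` in the ordered basis `uBasis` (which is orthonormal, so the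
matrix entries are inner products: entry `(A, B)` is the coefficient of `u_A` in `ρ(g)u_B`). -/
noncomputable def RMat (m : ℕ) (g : Matrix (Fin 2) (Fin 2) ℂ) :
    Matrix (Fin m ⊕ Fin m) (Fin m ⊕ Fin m) ℂ :=
  fun A B => innerVn (2 * m - 1) (rhoRep g (uBasis m B)) (uBasis m A)

/-- The structure map `S`: conjugate all coefficients and substitute `z₀ ↦ -z₁`, `z₁ ↦ z₀`. -/
noncomputable def structMap : MvPolynomial (Fin 2) ℂ →+* MvPolynomial (Fin 2) ℂ :=
  MvPolynomial.eval₂Hom (MvPolynomial.C.comp (starRingEnd ℂ)) ![-X 1, X 0]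

lemma structMap_smul (c : ℂ) (f : MvPolynomial (Fin 2) ℂ) :
    structMap (c • f) = (starRingEnd ℂ) c • structMap f := by
  simp [structMap, MvPolynomial.smul_eq_C_mul]

lemma monomial_two (i j : ℕ) (c : ℂ) :
    (monomial (Finsupp.single (0 : Fin 2) i + Finsupp.single 1 j) c) = C c * (X 0 ^ i * X 1 ^ j) := by
  rw [X_pow_eq_monomial, X_pow_eq_monomial, monomial_mul, C_mul_monomial]
  simp

lemma structMap_monomial (i j : ℕ) (c : ℂ) :
    structMap (monomial (Finsupp.single 0 i + Finsupp.single 1 j) c)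
      = monomial (Finsupp.single 0 j + Finsupp.single 1 i) ((-1) ^ i * (starRingEnd ℂ) c) := by
  rw [monomial_two, monomial_two]
  simp only [structMap, map_mul, map_pow, eval₂Hom_X', coe_eval₂Hom, eval₂_C, RingHom.comp_apply,
    Matrix.cons_val_zero, Matrix.cons_val_one, map_neg, map_one]
  rw [neg_pow]
  ring

lemma single_add_single_inj (i j p q : ℕ) :
    (Finsupp.single (0 : Fin 2) i + Finsupp.single 1 j = Finsupp.single 0 p + Finsupp.single 1 q)
      ↔ i = p ∧ j = q := by
  constructor
  · intro h
    have h0 := DFunLike.congr_fun h 0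
    have h1 := DFunLike.congr_fun h 1
    simp at h0 h1
    exact ⟨h0, h1⟩
  · rintro ⟨rfl, rfl⟩
    rfl

lemma coeff_structMap (f : MvPolynomial (Fin 2) ℂ) (p q : ℕ) :
    (structMap f).coeff (Finsupp.single 0 p + Finsupp.single 1 q)
      = (-1) ^ q * (starRingEnd ℂ) (f.coeff (Finsupp.single 0 q + Finsupp.single 1 p)) := by
  induction f using MvPolynomial.induction_on' with
  | monomial d c =>
    obtain ⟨i, j, rfl⟩ : ∃ i j, d = Finsupp.single 0 i + Finsupp.single 1 j :=
      ⟨d 0, d 1, by ext t; fin_cases t <;> simp⟩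
    rw [structMap_monomial, coeff_monomial, coeff_monomial]
    simp only [single_add_single_inj]
    by_cases h : j = p ∧ i = q
    · obtain ⟨rfl, rfl⟩ := h
      simp
    · rw [if_neg h, if_neg (fun h' => h ⟨h'.2, h'.1⟩)]
      simp
  | add f g hf hg => simp only [map_add, coeff_add, hf, hg, mul_add]

/-- `S` is antiunitary: it conjugates the inner product. -/
lemma innerVn_structMap (n : ℕ) (f g : MvPolynomial (Fin 2) ℂ) :
    innerVn n (structMap f) (structMap g) = (starRingEnd ℂ) (innerVn n f g) := by
  unfold innerVn
  rw [← Finset.sum_range_reflect, map_sum]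
  refine Finset.sum_congr rfl fun k hk => ?_
  have hk' : k ≤ n := Nat.lt_succ_iff.mp (Finset.mem_range.mp hk)
  have e1 : n + 1 - 1 - k = n - k := by omega
  have e2 : n - (n - k) = k := by omega
  have hs : ((-1 : ℂ) ^ k) * (-1) ^ k = 1 := by rw [← mul_pow]; simp
  simp only [e1, e2, coeff_structMap, map_mul, map_pow, map_neg, map_one, Complex.conj_conj,
    map_natCast]
  linear_combination ((k.factorial : ℂ) * ((n - k).factorial : ℂ) *
    (starRingEnd ℂ) (f.coeff (Finsupp.single 0 k + Finsupp.single 1 (n - k))) *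
      g.coeff (Finsupp.single 0 k + Finsupp.single 1 (n - k))) * hs

/-- `S² = (-1)ⁿ` on the degree-`n` part, the only part seen by `innerVn n`. -/
lemma innerVn_structMap_structMap (n : ℕ) (f g : MvPolynomial (Fin 2) ℂ) :
    innerVn n (structMap (structMap f)) g = (-1) ^ n * innerVn n f g := by
  unfold innerVn
  rw [Finset.mul_sum]
  refine Finset.sum_congr rfl fun k hk => ?_
  have hk' : k ≤ n := Nat.lt_succ_iff.mp (Finset.mem_range.mp hk)
  have hs : ((-1 : ℂ) ^ (n - k)) * (-1) ^ k = (-1) ^ n := by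
    rw [← pow_add, Nat.sub_add_cancel hk']
  simp only [coeff_structMap, map_mul, map_pow, map_neg, map_one, Complex.conj_conj]
  rw [← hs]
  ring

lemma innerVn_smul_left (n : ℕ) (c : ℂ) (f g : MvPolynomial (Fin 2) ℂ) :
    innerVn n (c • f) g = c * innerVn n f g := by
  unfold innerVn
  rw [Finset.mul_sum]
  refine Finset.sum_congr rfl fun k _ => ?_
  rw [coeff_smul, smul_eq_mul]
  ring

lemma innerVn_smul_right (n : ℕ) (c : ℂ) (f g : MvPolynomial (Fin 2) ℂ) :
    innerVn n f (c • g) = (starRingEnd ℂ) c * innerVn n f g := by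
  unfold innerVn
  rw [Finset.mul_sum]
  refine Finset.sum_congr rfl fun k _ => ?_
  rw [coeff_smul, smul_eq_mul, map_mul]
  ring

lemma rhoRep_smul (g : Matrix (Fin 2) (Fin 2) ℂ) (c : ℂ) (f : MvPolynomial (Fin 2) ℂ) :
    rhoRep g (c • f) = c • rhoRep g f :=
  map_smul _ c f

/-- The inverse of `g ∈ SU(2)` has the form `[[α, β], [-conj β, conj α]]`, as it is both the adjoint
and the adjugate of `g`. -/
lemma inv_entries {g : Matrix (Fin 2) (Fin 2) ℂ} (hg : g ∈ Matrix.specialUnitaryGroup (Fin 2) ℂ) :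
    g⁻¹ 1 1 = (starRingEnd ℂ) (g⁻¹ 0 0) ∧ g⁻¹ 1 0 = -(starRingEnd ℂ) (g⁻¹ 0 1) := by
  obtain ⟨hu, hd⟩ := Matrix.mem_specialUnitaryGroup_iff.mp hg
  have h1 : g⁻¹ = star g := Matrix.inv_eq_right_inv (Matrix.mem_unitaryGroup_iff.mp hu)
  have h2 : g⁻¹ = g.adjugate := by rw [Matrix.inv_def, hd]; simp
  have h3 : star g = g.adjugate := h1.symm.trans h2
  rw [Matrix.adjugate_fin_two] at h3
  have h00 := congrFun (congrFun h3 0) 0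
  have h10 := congrFun (congrFun h3 1) 0
  simp [Matrix.star_apply] at h00 h10
  rw [h1]
  simp only [Matrix.star_apply, RCLike.star_def, Complex.conj_conj]
  constructor
  · rw [← h00, Complex.conj_conj]
  · exact h10

/-- `S` commutes with `ρ(g)`; it is enough to compare the two maps on `z₀` and `z₁`. -/
lemma structMap_rhoRep {g : Matrix (Fin 2) (Fin 2) ℂ}
    (hg : g ∈ Matrix.specialUnitaryGroup (Fin 2) ℂ) (f : MvPolynomial (Fin 2) ℂ) :
    structMap (rhoRep g f) = rhoRep g (structMap f) := by
  obtain ⟨h11, h10⟩ := inv_entries hg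
  let r : MvPolynomial (Fin 2) ℂ →ₐ[ℂ] MvPolynomial (Fin 2) ℂ :=
    MvPolynomial.aeval (fun i : Fin 2 => ∑ j : Fin 2, g⁻¹ j i • MvPolynomial.X j)
  have key : structMap.comp r.toRingHom = r.toRingHom.comp structMap := by
    apply MvPolynomial.ringHom_ext
    · intro c
      simp [r, structMap, MvPolynomial.algebraMap_eq]
    · intro i
      fin_cases i
      · simp [r, structMap, h11, h10, MvPolynomial.smul_eq_C_mul]
        try ring
      · simp [r, structMap, h11, h10, MvPolynomial.smul_eq_C_mul]
        try ring
  exact DFunLike.congr_fun key f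

lemma structMap_vkn {n k : ℕ} (hk : k ≤ n) :
    structMap (vkn n k) = ((-1 : ℂ) ^ k) • vkn n (n - k) := by
  have e : n - (n - k) = k := by omega
  unfold vkn
  rw [if_pos hk, if_pos (Nat.sub_le n k), e, structMap_smul, structMap_monomial, Complex.conj_ofReal,
    mul_comm ((n - k).factorial : ℝ), smul_comm, smul_monomial (σ := Fin 2) ((-1 : ℂ) ^ k)]
  simp

lemma uBasis_inr (m : ℕ) (k : Fin m) :
    uBasis m (Sum.inr k) = Complex.I • structMap (uBasis m (Sum.inl k)) := by
  have hk : (k : ℕ) ≤ 2 * m - 1 := by omega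
  simp only [uBasis, Sum.elim_inl, Sum.elim_inr]
  rw [structMap_vkn hk, smul_smul, mul_comm]

lemma RMat_inr_inr (m : ℕ) {g : Matrix (Fin 2) (Fin 2) ℂ}
    (hg : g ∈ Matrix.specialUnitaryGroup (Fin 2) ℂ) (k l : Fin m) :
    RMat m g (Sum.inr k) (Sum.inr l) = (starRingEnd ℂ) (RMat m g (Sum.inl k) (Sum.inl l)) := by
  unfold RMat
  rw [uBasis_inr, uBasis_inr, rhoRep_smul, innerVn_smul_left, innerVn_smul_right,
    ← structMap_rhoRep hg, innerVn_structMap, ← mul_assoc, Complex.conj_I]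
  simp

/-- The sign comes from `S² = -1` in odd degree. -/
lemma RMat_inr_inl (m : ℕ) (hm : 1 ≤ m) {g : Matrix (Fin 2) (Fin 2) ℂ}
    (hg : g ∈ Matrix.specialUnitaryGroup (Fin 2) ℂ) (k l : Fin m) :
    RMat m g (Sum.inr k) (Sum.inl l) = -(starRingEnd ℂ) (RMat m g (Sum.inl k) (Sum.inr l)) := by
  have hodd : Odd (2 * m - 1) := ⟨m - 1, by omega⟩
  unfold RMat
  rw [uBasis_inr, uBasis_inr, rhoRep_smul, innerVn_smul_left, innerVn_smul_right,
    ← structMap_rhoRep hg, map_mul, ← innerVn_structMap, innerVn_structMap_structMap,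
    hodd.neg_one_pow]
  ring

/-- For odd `n = 2m−1` and `g ∈ SU(2)`, the matrix `R(g)` of `ρ_n(g)` in the
basis `u` satisfies `J·R(g) = conj(R(g))·J` with `J = [[0, −I_m],[I_m, 0]]`. -/
theorem statement3 (m : ℕ) (hm : 1 ≤ m)
    (g : Matrix (Fin 2) (Fin 2) ℂ) (hg : g ∈ Matrix.specialUnitaryGroup (Fin 2) ℂ) :
    Matrix.fromBlocks (0 : Matrix (Fin m) (Fin m) ℂ) (-1) 1 0 * RMat m g
      = (RMat m g).map (starRingEnd ℂ) *
          Matrix.fromBlocks (0 : Matrix (Fin m) (Fin m) ℂ) (-1) 1 0 := by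
  have h21 := RMat_inr_inl m hm hg
  have h22 := RMat_inr_inr m hg
  generalize RMat m g = R at h21 h22 ⊢
  rw [← Matrix.fromBlocks_toBlocks R, Matrix.fromBlocks_map, Matrix.fromBlocks_multiply,
    Matrix.fromBlocks_multiply, Matrix.fromBlocks_inj]
  simp only [zero_mul, mul_zero, neg_mul, mul_neg, one_mul, mul_one, zero_add, add_zero]
  refine ⟨?_, ?_, ?_, ?_⟩ <;> ext k l <;>
    simp [Matrix.toBlocks₁₁, Matrix.toBlocks₁₂, Matrix.toBlocks₂₁, Matrix.toBlocks₂₂, h21, h22]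
end

section
/- For each fixed n ≥ 0, the (n+1)² matrix-coefficient functions g ↦ Λ_{l k}(g), 0 ≤ l, k ≤ n, from SU(2) to ℂ are linearly independent over ℂ. -/
/-!
Each monomial occurring in `Λ_{l k}(a, b)` has weight `n - k - l` under `a ↦ z a` and weight
`l - k` under `b ↦ w b`, for `z, w` on the unit circle (`lamCoeff_torus`). The pair of weights
determines `(l, k)`, so the `Λ_{l k}` transform under pairwise distinct characters of the torus
`Circle × Circle`. By linear independence of characters, a linear relation
`∑ c_{l k} Λ_{l k} = 0` on `SU(2)` forces `c_{l k} Λ_{l k}(a, b) = 0` for every `(l, k)` and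
every `(a, b)` on the unit sphere.

It remains to see that no `Λ_{l k}` vanishes identically on the sphere. On real points `(r, t r)`
it equals a nonzero multiple of `r ^ n` times the value at `t` of a polynomial
(`lamPoly`) whose monomials have distinct degrees and whose coefficients are not all zero.
-/

open scoped BigOperators Matrix
open MvPolynomial

/-- The matrix coefficients `Λ_{l k}(g)` of the representation `ρ_n` of `SU(2)`,
written in terms of `a = g₀₀` and `b = g₀₁`. -/
noncomputable def LamCoeff (n l k : ℕ) (a b : ℂ) : ℂ :=
  ((Real.sqrt (((l.factorial : ℝ) * ((n - l).factorial : ℝ)) /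
      ((k.factorial : ℝ) * ((n - k).factorial : ℝ))) : ℝ) : ℂ) *
    ∑ p ∈ Finset.range (l + 1),
      (k.choose p : ℂ) * ((n - k).choose (l - p) : ℂ) *
        a ^ (n - k - (l - p)) * (-b) ^ (l - p) *
        ((starRingEnd ℂ) a) ^ p * ((starRingEnd ℂ) b) ^ (k - p)

/-- The character `(z, w) ↦ z ^ i * w ^ j` of the torus. -/
noncomputable def torusChar (i j : ℤ) : Circle × Circle →* ℂ where
  toFun x := (x.1 : ℂ) ^ i * (x.2 : ℂ) ^ j
  map_one' := by simp
  map_mul' x y := by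
    simp only [Prod.fst_mul, Prod.snd_mul, Circle.coe_mul, mul_zpow]
    ring

lemma int_eq_of_circle_zpow {i j : ℤ} (h : ∀ z : Circle, (z : ℂ) ^ i = (z : ℂ) ^ j) : i = j := by
  by_contra hij
  have hm : ((i : ℂ) - j) ≠ 0 := by
    rw [sub_ne_zero]; exact_mod_cast hij
  -- A point `z` with `z ^ (i - j) = exp (π I) = -1`.
  have h1 := h (Circle.exp (Real.pi / ((i : ℝ) - j)))
  rw [Circle.coe_exp, ← Complex.exp_int_mul, ← Complex.exp_int_mul] at h1
  have h2 : Complex.exp (Real.pi * Complex.I) = 1 := by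
    have : (Real.pi : ℂ) * Complex.I =
        i * (((Real.pi / ((i : ℝ) - j) : ℝ) : ℂ) * Complex.I)
        - j * (((Real.pi / ((i : ℝ) - j) : ℝ) : ℂ) * Complex.I) := by
      push_cast
      field_simp
    rw [this, Complex.exp_sub, h1, div_self (Complex.exp_ne_zero _)]
  rw [Complex.exp_pi_mul_I] at h2
  norm_num at h2

lemma torusChar_injective {i j i' j' : ℤ} (h : torusChar i j = torusChar i' j') :
    i = i' ∧ j = j' := by
  constructor
  · apply int_eq_of_circle_zpow
    intro z
    simpa [torusChar] using DFunLike.congr_fun h (z, 1)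
  · apply int_eq_of_circle_zpow
    intro z
    simpa [torusChar] using DFunLike.congr_fun h (1, z)

lemma lamCoeff_torus {n l k : ℕ} (hkn : k ≤ n) (z w : Circle) (a b : ℂ) :
    LamCoeff n l k (z * a) (w * b) =
      LamCoeff n l k a b * torusChar ((n : ℤ) - k - l) ((l : ℤ) - k) (z, w) := by
  unfold LamCoeff
  rw [mul_assoc, Finset.sum_mul]
  congr 1
  refine Finset.sum_congr rfl fun p hp => ?_
  have hpl : p ≤ l := by simpa [Nat.lt_succ_iff] using hp
  -- Outside `p ≤ k`, `l - p ≤ n - k` the truncated exponents are wrong, but the binomials vanish.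
  rcases lt_or_ge k p with hk | hk
  · simp [Nat.choose_eq_zero_of_lt hk]
  rcases lt_or_ge (n - k) (l - p) with hq | hq
  · simp [Nat.choose_eq_zero_of_lt hq]
  have hz : (z : ℂ) ≠ 0 := z.coe_ne_zero
  have hw : (w : ℂ) ≠ 0 := w.coe_ne_zero
  have e1 : (n : ℤ) - k - l = ((n - k - (l - p) : ℕ) : ℤ) - (p : ℕ) := by omega
  have e2 : (l : ℤ) - k = ((l - p : ℕ) : ℤ) - (k - p : ℕ) := by omega
  simp only [torusChar, MonoidHom.coe_mk, OneHom.coe_mk, e1, e2, zpow_sub₀ hz, zpow_sub₀ hw,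
    zpow_natCast, map_mul, ← Circle.coe_inv_eq_conj, Circle.coe_inv, mul_pow, inv_pow,
    ← mul_neg]
  ring

/-- The dehomogenisation of `Λ_{l k}` on real points, in the variable `t = b / a`, up to the
normalising square root. -/
noncomputable def lamPoly (n l k : ℕ) : Polynomial ℝ :=
  ∑ p ∈ Finset.range (l + 1),
    Polynomial.monomial (l + k - 2 * p)
      ((k.choose p : ℝ) * ((n - k).choose (l - p) : ℝ) * (-1) ^ (l - p))

lemma lamPoly_ne_zero {n l k : ℕ} (hl : l ≤ n) (hk : k ≤ n) : lamPoly n l k ≠ 0 := by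
  -- The smallest `p` with `l - p ≤ n - k`; it satisfies `p ≤ k` because `l ≤ n`.
  obtain ⟨p, hp⟩ : ∃ p, p = l - (n - k) := ⟨_, rfl⟩
  intro h
  have h1 : (lamPoly n l k).coeff (l + k - 2 * p) =
      (k.choose p : ℝ) * ((n - k).choose (l - p) : ℝ) * (-1) ^ (l - p) := by
    unfold lamPoly
    rw [Polynomial.finsetSum_coeff, Finset.sum_eq_single p]
    · rw [Polynomial.coeff_monomial, if_pos rfl]
    · intro q hq hqp
      have hql : q ≤ l := by simpa [Nat.lt_succ_iff] using hq
      rcases lt_or_ge k q with hkq | hkq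
      · simp [Nat.choose_eq_zero_of_lt hkq]
      · rw [Polynomial.coeff_monomial, if_neg (by omega)]
    · intro hq
      exact absurd (Finset.mem_range.2 (by omega)) hq
  rw [h, Polynomial.coeff_zero] at h1
  have c1 : (k.choose p : ℝ) ≠ 0 := by
    exact_mod_cast (Nat.choose_pos (by omega)).ne'
  have c2 : ((n - k).choose (l - p) : ℝ) ≠ 0 := by
    exact_mod_cast (Nat.choose_pos (by omega)).ne'
  exact mul_ne_zero (mul_ne_zero c1 c2) (pow_ne_zero _ (by norm_num)) h1.symm

lemma lamCoeff_real {n l k : ℕ} (hk : k ≤ n) (r t : ℝ) :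
    LamCoeff n l k (r : ℂ) ((t * r : ℝ) : ℂ) =
      ((Real.sqrt (((l.factorial : ℝ) * ((n - l).factorial : ℝ)) /
        ((k.factorial : ℝ) * ((n - k).factorial : ℝ))) * (r ^ n * (lamPoly n l k).eval t) : ℝ) : ℂ)
    := by
  unfold LamCoeff lamPoly
  rw [Complex.ofReal_mul (Real.sqrt _)]
  congr 1
  rw [Polynomial.eval_finsetSum, Finset.mul_sum, Complex.ofReal_sum]
  refine Finset.sum_congr rfl fun p hp => ?_
  have hpl : p ≤ l := by simpa [Nat.lt_succ_iff] using hp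
  rcases lt_or_ge k p with hkp | hkp
  · simp [Nat.choose_eq_zero_of_lt hkp]
  rcases lt_or_ge (n - k) (l - p) with hq | hq
  · simp [Nat.choose_eq_zero_of_lt hq]
  have e1 : n = (n - k - (l - p)) + (l - p) + p + (k - p) := by omega
  have e2 : l + k - 2 * p = (l - p) + (k - p) := by omega
  have e3 : r ^ n = r ^ (n - k - (l - p)) * r ^ (l - p) * r ^ p * r ^ (k - p) := by
    rw [← pow_add, ← pow_add, ← pow_add, ← e1]
  rw [Polynomial.eval_monomial, e2, e3, pow_add]
  simp only [Complex.conj_ofReal]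
  push_cast
  rw [neg_pow]
  ring

/-- No matrix coefficient vanishes identically, already on the real points of the sphere. -/
lemma exists_lamCoeff_ne_zero {n l k : ℕ} (hl : l ≤ n) (hk : k ≤ n) :
    ∃ r s : ℝ, r ^ 2 + s ^ 2 = 1 ∧ LamCoeff n l k (r : ℂ) (s : ℂ) ≠ 0 := by
  obtain ⟨t, ht⟩ : ∃ t, (lamPoly n l k).eval t ≠ 0 := by
    by_contra! h
    exact lamPoly_ne_zero hl hk (Polynomial.funext (by simpa using h))
  have hpos : 0 < 1 + t ^ 2 := by positivity
  have hs : 0 < Real.sqrt (1 + t ^ 2) := Real.sqrt_pos.2 hpos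
  refine ⟨(Real.sqrt (1 + t ^ 2))⁻¹, t * (Real.sqrt (1 + t ^ 2))⁻¹, ?_, ?_⟩
  · rw [mul_pow, inv_pow, Real.sq_sqrt hpos.le]
    field_simp
  · rw [lamCoeff_real hk, Complex.ofReal_ne_zero]
    refine mul_ne_zero (Real.sqrt_pos.2 (by positivity)).ne' (mul_ne_zero (by positivity) ht)

/-- Every point of the unit sphere is the first row of an element of `SU(2)`. -/
lemma exists_su2 (a b : ℂ) (h : a * (starRingEnd ℂ) a + b * (starRingEnd ℂ) b = 1) :
    ∃ g : Matrix.specialUnitaryGroup (Fin 2) ℂ,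
      (g : Matrix (Fin 2) (Fin 2) ℂ) 0 0 = a ∧ (g : Matrix (Fin 2) (Fin 2) ℂ) 0 1 = b := by
  refine ⟨⟨!![a, b; -(starRingEnd ℂ) b, (starRingEnd ℂ) a], ?_⟩, by simp, by simp⟩
  rw [Matrix.mem_specialUnitaryGroup_iff, Matrix.mem_unitaryGroup_iff]
  constructor
  · ext i j
    fin_cases i <;> fin_cases j <;>
      simp [Matrix.mul_apply, Fin.sum_univ_two, Matrix.star_apply] <;>
      first | ring1 | linear_combination h
  · rw [Matrix.det_fin_two_of]
    linear_combination h

/-- For fixed `n`, the `(n+1)²` matrix-coefficient functions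
`g ↦ Λ_{l k}(g)` on `SU(2)` are linearly independent over `ℂ`. -/
theorem statement4 (n : ℕ) :
    LinearIndependent ℂ (fun lk : Fin (n + 1) × Fin (n + 1) =>
      fun g : Matrix.specialUnitaryGroup (Fin 2) ℂ =>
        LamCoeff n (lk.1 : ℕ) (lk.2 : ℕ)
          ((g : Matrix (Fin 2) (Fin 2) ℂ) 0 0) ((g : Matrix (Fin 2) (Fin 2) ℂ) 0 1)) := by
  have hchar : LinearIndependent ℂ (fun lk : Fin (n + 1) × Fin (n + 1) =>
      (torusChar ((n : ℤ) - (lk.2 : ℕ) - (lk.1 : ℕ)) (((lk.1 : ℕ) : ℤ) - (lk.2 : ℕ)) :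
        Circle × Circle → ℂ)) := by
    refine (linearIndependent_monoidHom (Circle × Circle) ℂ).comp
      (fun lk : Fin (n + 1) × Fin (n + 1) =>
        torusChar ((n : ℤ) - (lk.2 : ℕ) - (lk.1 : ℕ)) (((lk.1 : ℕ) : ℤ) - (lk.2 : ℕ))) ?_
    intro x y hxy
    obtain ⟨h1, h2⟩ := torusChar_injective hxy
    ext <;> omega
  rw [Fintype.linearIndependent_iff] at hchar ⊢
  intro c hc lk
  obtain ⟨r, s, hrs, hne⟩ := exists_lamCoeff_ne_zero (n := n) (l := lk.1) (k := lk.2)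
    (by omega) (by omega)
  have key := hchar (fun x => c x * LamCoeff n x.1 x.2 r s) ?_ lk
  · exact (mul_eq_zero.1 key).resolve_right hne
  · funext ⟨z, w⟩
    have hz : (z : ℂ) * (starRingEnd ℂ) z = 1 := by
      rw [← Circle.coe_inv_eq_conj, ← Circle.coe_mul, mul_inv_cancel, Circle.coe_one]
    have hw : (w : ℂ) * (starRingEnd ℂ) w = 1 := by
      rw [← Circle.coe_inv_eq_conj, ← Circle.coe_mul, mul_inv_cancel, Circle.coe_one]
    have hrs' : (r : ℂ) ^ 2 + (s : ℂ) ^ 2 = 1 := by exact_mod_cast hrs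
    obtain ⟨g, ha, hb⟩ := exists_su2 (z * r) (w * s) (by
      simp only [map_mul, Complex.conj_ofReal]
      linear_combination (r : ℂ) ^ 2 * hz + (s : ℂ) ^ 2 * hw + hrs')
    have h := congrFun hc g
    simp only [Finset.sum_apply, Pi.smul_apply, smul_eq_mul, Pi.zero_apply, ha, hb,
      fun x : Fin (n + 1) × Fin (n + 1) => lamCoeff_torus (Nat.lt_succ_iff.1 x.2.2) (l := x.1)]
      at h
    simpa only [Finset.sum_apply, Pi.smul_apply, smul_eq_mul, Pi.zero_apply, mul_assoc] using h
end

section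
/- Let V = V_{n₁} ⊕ … ⊕ V_{n_s} with each n_α = 2m_α − 1 odd, equipped with its left quaternionic structure, and let H act blockwise with H·u_{λ,α} = λ·u_{λ,α} and H·(j·u_{λ,α}) = −λ·(j·u_{λ,α}) for each positive weight λ and each α. If z ∈ V is nonzero and H·z = p·z for some quaternion p (left scalar multiplication), then there exist a unit quaternion q and a positive weight λ₀ (an odd positive integer with λ₀ ≤ n_α for some α) such that q·z lies in the complex span of {u_{λ₀,α} : 1 ≤ α ≤ s}, and H·(q·z) = λ₀·(q·z). -/
/-!
Write the `ℍ`-coordinates of `z` as `w = a + b·j`, one for each block and each weight `λ_k`. Since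
`H` scales `v_k` by `λ_k` and `j·v_k` by `-λ_k`, the equation `H z = p·z` says
`p·w = λ_k·(a - b·j)` for every coordinate (`coordEq_of_eigen`). Taking norms, every nonzero
coordinate has weight `λ_k = |p|` (`CoordEq.normSq`), so a single weight `λ₀` occurs and each block
has at most one nonzero coordinate. As `a - b·j = -i·w·i`, the equation also reads
`w⁻¹·(i·p)·w = λ₀·i`, so for two nonzero coordinates `w, w'` the quaternion `w⁻¹·w'` commutes with
`i`, i.e. is complex (`CoordEq.cross`). Hence `q = conj(w)/|w|`, for any one nonzero coordinate
`w`, turns all coordinates into complex numbers at once, which puts `q·z` in the complex span of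
the `u_{λ₀,α}`.
-/


open scoped BigOperators Matrix
open MvPolynomial

/-- `j·u_{λ_k,n} = u_{−λ_k,n} = (−1)^k·i·v_{n−k,n}`. -/
noncomputable def jvkn (n k : ℕ) : MvPolynomial (Fin 2) ℂ :=
  ((-1 : ℂ) ^ k * Complex.I) • vkn n (n - k)

/-- `u_{λ,n}` for a positive weight `λ` (zero if `λ` is not a weight of `V_n`). -/
noncomputable def upos (n lam : ℕ) : MvPolynomial (Fin 2) ℂ :=
  if lam ≤ n then vkn n ((n - lam) / 2) else 0

/-- `j·u_{λ,n}` for a positive weight `λ` (zero if `λ` is not a weight of `V_n`). -/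
noncomputable def uneg (n lam : ℕ) : MvPolynomial (Fin 2) ℂ :=
  if lam ≤ n then jvkn n ((n - lam) / 2) else 0

/-- The quaternion `a + b·j` built from two complex numbers `a, b`. -/
def toQuat (a b : ℂ) : Quaternion ℝ := ⟨a.re, a.im, b.re, b.im⟩

/-- Left multiplication by a quaternion `q = q₁ + q₂·j` on a block `V_{2m−1} ≅ ℍ^m`:
`q·(a + b·j) = (q₁a − q₂·conj b) + (q₁b + q₂·conj a)·j` in each `ℍ`-coordinate. -/
noncomputable def qmulB (m : ℕ) (q : Quaternion ℝ) (f : MvPolynomial (Fin 2) ℂ) :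
    MvPolynomial (Fin 2) ℂ :=
  ∑ k ∈ Finset.range m,
    ((((q.re : ℂ) + q.imI * Complex.I) * innerVn (2 * m - 1) f (vkn (2 * m - 1) k)
        - ((q.imJ : ℂ) + q.imK * Complex.I) *
            (starRingEnd ℂ) (innerVn (2 * m - 1) f (jvkn (2 * m - 1) k))) • vkn (2 * m - 1) k
      + (((q.re : ℂ) + q.imI * Complex.I) * innerVn (2 * m - 1) f (jvkn (2 * m - 1) k)
          + ((q.imJ : ℂ) + q.imK * Complex.I) *
              (starRingEnd ℂ) (innerVn (2 * m - 1) f (vkn (2 * m - 1) k))) • jvkn (2 * m - 1) k)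

/-! ### Coordinates on a block -/

/-- The coordinate of `f` along `v_{k,n}` is a rescaled monomial coefficient. -/
lemma innerVn_vkn (n k : ℕ) (hk : k ≤ n) (f : MvPolynomial (Fin 2) ℂ) :
    innerVn n f (vkn n k) =
      ((Real.sqrt ((k.factorial : ℝ) * ((n - k).factorial : ℝ)) : ℝ) : ℂ) *
        f.coeff (Finsupp.single 0 k + Finsupp.single 1 (n - k)) := by
  unfold innerVn
  rw [Finset.sum_eq_single_of_mem k (Finset.mem_range.mpr (by omega))]
  · have hpos : (0 : ℝ) < (k.factorial : ℝ) * ((n - k).factorial : ℝ) := by positivity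
    have h1 : ((k.factorial : ℂ) * ((n - k).factorial : ℂ)) =
        ((Real.sqrt ((k.factorial : ℝ) * ((n - k).factorial : ℝ)) : ℝ) : ℂ) *
        ((Real.sqrt ((k.factorial : ℝ) * ((n - k).factorial : ℝ)) : ℝ) : ℂ) := by
      rw [← Complex.ofReal_mul, Real.mul_self_sqrt hpos.le]
      push_cast
      rfl
    have h2 : ((Real.sqrt ((k.factorial : ℝ) * ((n - k).factorial : ℝ)) : ℝ) : ℂ) ≠ 0 :=
      Complex.ofReal_ne_zero.mpr (Real.sqrt_pos.mpr hpos).ne'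
    rw [h1, vkn, if_pos hk, MvPolynomial.coeff_smul, MvPolynomial.coeff_monomial, if_pos rfl]
    generalize ((Real.sqrt ((k.factorial : ℝ) * ((n - k).factorial : ℝ)) : ℝ)) = r at h2 ⊢
    rw [smul_eq_mul, mul_one, Complex.conj_ofReal, Complex.ofReal_inv]
    field_simp
  · intro l _ hl
    rw [vkn, if_pos hk, MvPolynomial.coeff_smul, MvPolynomial.coeff_monomial, if_neg]
    · simp
    · intro h
      have := DFunLike.congr_fun h 0
      simp at this
      exact hl this.symm

lemma innerVn_jvkn (n k : ℕ) (f : MvPolynomial (Fin 2) ℂ) :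
    innerVn n f (jvkn n k) =
      (starRingEnd ℂ) ((-1 : ℂ) ^ k * Complex.I) * innerVn n f (vkn n (n - k)) := by
  unfold innerVn jvkn
  rw [Finset.mul_sum]
  refine Finset.sum_congr rfl fun l _ => ?_
  rw [MvPolynomial.coeff_smul, smul_eq_mul, map_mul]
  ring

lemma innerVn_add (n : ℕ) (f g h : MvPolynomial (Fin 2) ℂ) :
    innerVn n (f + g) h = innerVn n f h + innerVn n g h := by
  simp only [innerVn, ← Finset.sum_add_distrib, MvPolynomial.coeff_add]
  exact Finset.sum_congr rfl fun _ _ => by ring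

lemma innerVn_smul (n : ℕ) (c : ℂ) (f h : MvPolynomial (Fin 2) ℂ) :
    innerVn n (c • f) h = c * innerVn n f h := by
  simp only [innerVn, Finset.mul_sum, MvPolynomial.coeff_smul, smul_eq_mul]
  exact Finset.sum_congr rfl fun _ _ => by ring

lemma innerVn_sum (n : ℕ) {ι : Type*} (S : Finset ι) (F : ι → MvPolynomial (Fin 2) ℂ)
    (h : MvPolynomial (Fin 2) ℂ) :
    innerVn n (∑ i ∈ S, F i) h = ∑ i ∈ S, innerVn n (F i) h := by
  let φ : MvPolynomial (Fin 2) ℂ →+ ℂ :=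
    AddMonoidHom.mk' (fun f => innerVn n f h) fun f g => innerVn_add n f g h
  exact map_sum φ F S

lemma innerVn_vkn_vkn (n k l : ℕ) (hk : k ≤ n) (hl : l ≤ n) :
    innerVn n (vkn n k) (vkn n l) = if k = l then 1 else 0 := by
  rw [innerVn_vkn n l hl, vkn, if_pos hk, MvPolynomial.coeff_smul, MvPolynomial.coeff_monomial]
  by_cases h : k = l
  · subst h
    have hpos : (0 : ℝ) < (k.factorial : ℝ) * ((n - k).factorial : ℝ) := by positivity
    have h2 : ((Real.sqrt ((k.factorial : ℝ) * ((n - k).factorial : ℝ)) : ℝ) : ℂ) ≠ 0 :=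
      Complex.ofReal_ne_zero.mpr (Real.sqrt_pos.mpr hpos).ne'
    rw [if_pos rfl, if_pos rfl, smul_eq_mul, mul_one, Complex.ofReal_inv, mul_inv_cancel₀ h2]
  · rw [if_neg h, if_neg, smul_zero, mul_zero]
    intro h'
    have := DFunLike.congr_fun h' 0
    simp at this
    exact h this

lemma phase_mul_conj (k : ℕ) :
    ((-1 : ℂ) ^ k * Complex.I) * (starRingEnd ℂ) ((-1 : ℂ) ^ k * Complex.I) = 1 := by
  have h : ((-1 : ℂ) ^ k) * (-1) ^ k = 1 := by rw [← mul_pow]; simp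
  simp only [map_mul, map_pow, map_neg, map_one, Complex.conj_I]
  linear_combination (-Complex.I * Complex.I) * h - Complex.I_mul_I

/-- The vectors `v_k, j·v_k` (`k < m`) form an orthonormal family: coordinates can be read off. -/
lemma coords (m : ℕ) (x y : ℕ → ℂ) (l : ℕ) (hl : l < m) :
    innerVn (2 * m - 1) (∑ k ∈ Finset.range m,
      (x k • vkn (2 * m - 1) k + y k • jvkn (2 * m - 1) k)) (vkn (2 * m - 1) l) = x l ∧
    innerVn (2 * m - 1) (∑ k ∈ Finset.range m,
      (x k • vkn (2 * m - 1) k + y k • jvkn (2 * m - 1) k)) (jvkn (2 * m - 1) l) = y l := by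
  constructor
  · rw [innerVn_sum, Finset.sum_eq_single_of_mem l (Finset.mem_range.mpr hl)]
    · rw [innerVn_add, innerVn_smul, innerVn_smul, jvkn, innerVn_smul,
        innerVn_vkn_vkn _ _ _ (by omega) (by omega), innerVn_vkn_vkn _ _ _ (by omega) (by omega),
        if_pos rfl, if_neg (by omega)]
      ring
    · intro k hk hkl
      have := Finset.mem_range.mp hk
      rw [innerVn_add, innerVn_smul, innerVn_smul, jvkn, innerVn_smul,
        innerVn_vkn_vkn _ _ _ (by omega) (by omega), innerVn_vkn_vkn _ _ _ (by omega) (by omega),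
        if_neg (by omega), if_neg (by omega)]
      ring
  · rw [innerVn_jvkn, innerVn_sum, Finset.sum_eq_single_of_mem l (Finset.mem_range.mpr hl)]
    · rw [innerVn_add, innerVn_smul, innerVn_smul, jvkn, innerVn_smul,
        innerVn_vkn_vkn _ _ _ (by omega) (by omega), innerVn_vkn_vkn _ _ _ (by omega) (by omega),
        if_pos rfl, if_neg (by omega)]
      linear_combination y l * phase_mul_conj l
    · intro k hk hkl
      have := Finset.mem_range.mp hk
      rw [innerVn_add, innerVn_smul, innerVn_smul, jvkn, innerVn_smul,
        innerVn_vkn_vkn _ _ _ (by omega) (by omega), innerVn_vkn_vkn _ _ _ (by omega) (by omega),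
        if_neg (by omega), if_neg (by omega)]
      ring

/-- Every element of `V_{2m-1}` is the sum of its `ℍ`-coordinates `a_k + b_k·j` times `v_k`. -/
lemma expand (m : ℕ) (f : MvPolynomial (Fin 2) ℂ)
    (hf : f ∈ Submodule.span ℂ (Set.range fun k : Fin (2 * m) => vkn (2 * m - 1) (k : ℕ))) :
    f = ∑ k ∈ Finset.range m,
      (innerVn (2 * m - 1) f (vkn (2 * m - 1) k) • vkn (2 * m - 1) k +
        innerVn (2 * m - 1) f (jvkn (2 * m - 1) k) • jvkn (2 * m - 1) k) := by
  induction hf using Submodule.span_induction with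
  | mem x hx =>
    obtain ⟨⟨l, hl⟩, rfl⟩ := hx
    dsimp only
    by_cases h : l < m
    · rw [Finset.sum_eq_single_of_mem l (Finset.mem_range.mpr h)]
      · rw [innerVn_jvkn, innerVn_vkn_vkn _ _ _ (by omega) (by omega),
          innerVn_vkn_vkn _ _ _ (by omega) (by omega), if_pos rfl, if_neg (by omega)]
        simp
      · intro k hk hkl
        have := Finset.mem_range.mp hk
        rw [innerVn_jvkn, innerVn_vkn_vkn _ _ _ (by omega) (by omega),
          innerVn_vkn_vkn _ _ _ (by omega) (by omega), if_neg (by omega), if_neg (by omega)]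
        simp
    · -- In the upper half, `v_l` is a phase times `j·v_{2m-1-l}`.
      rw [Finset.sum_eq_single_of_mem (2 * m - 1 - l) (Finset.mem_range.mpr (by omega))]
      · rw [innerVn_jvkn, innerVn_vkn_vkn _ _ _ (by omega) (by omega),
          innerVn_vkn_vkn _ _ _ (by omega) (by omega),
          if_neg (show ¬ l = 2 * m - 1 - l by omega),
          if_pos (show l = 2 * m - 1 - (2 * m - 1 - l) by omega),
          jvkn, smul_smul, mul_one, mul_comm ((starRingEnd ℂ) _), phase_mul_conj, zero_smul, zero_add, one_smul,
          show 2 * m - 1 - (2 * m - 1 - l) = l by omega]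
      · intro k hk hkl
        have := Finset.mem_range.mp hk
        rw [innerVn_jvkn, innerVn_vkn_vkn _ _ _ (by omega) (by omega),
          innerVn_vkn_vkn _ _ _ (by omega) (by omega), if_neg (by omega), if_neg (by omega)]
        simp
  | zero =>
    have h0 : ∀ g, innerVn (2 * m - 1) 0 g = 0 := fun g => by simp [innerVn]
    simp [h0]
  | add x y _ _ hx hy =>
    conv_lhs => rw [hx, hy]
    rw [← Finset.sum_add_distrib]
    refine Finset.sum_congr rfl fun k _ => ?_
    rw [innerVn_add, innerVn_add]
    module
  | smul c x _ hx =>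
    conv_lhs => rw [hx]
    rw [Finset.smul_sum]
    refine Finset.sum_congr rfl fun k _ => ?_
    rw [innerVn_smul, innerVn_smul]
    module

/-! ### The quaternionic equation for one coordinate -/

/-- The coordinate form of `H w = p·w` for `w = a + b·j` of weight `r`, with `p = p₁ + p₂·j`;
that is, `p·(a + b·j) = r·(a - b·j)`. -/
def CoordEq (p₁ p₂ : ℂ) (r : ℕ) (a b : ℂ) : Prop :=
  p₁ * a - p₂ * (starRingEnd ℂ) b = r * a ∧ p₁ * b + p₂ * (starRingEnd ℂ) a = -(r * b)

/-- Taking norms in `p·(a + b·j) = r·(a - b·j)` gives `|p| = r`. -/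
lemma CoordEq.normSq {p₁ p₂ : ℂ} {r : ℕ} {a b : ℂ} (h : CoordEq p₁ p₂ r a b)
    (h0 : ¬ (a = 0 ∧ b = 0)) :
    Complex.normSq p₁ + Complex.normSq p₂ = (r : ℝ) ^ 2 := by
  obtain ⟨h1, h2⟩ := h
  have hne : Complex.normSq a + Complex.normSq b ≠ 0 := by
    intro h
    have ha := Complex.normSq_nonneg a
    have hb := Complex.normSq_nonneg b
    exact h0 ⟨Complex.normSq_eq_zero.mp (by linarith), Complex.normSq_eq_zero.mp (by linarith)⟩
  have c1 := congrArg (starRingEnd ℂ) h1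
  have c2 := congrArg (starRingEnd ℂ) h2
  simp only [map_mul, map_sub, map_add, map_neg, Complex.conj_conj, map_natCast] at c1 c2
  have key : ((Complex.normSq p₁ + Complex.normSq p₂ : ℝ) : ℂ) *
      ((Complex.normSq a + Complex.normSq b : ℝ) : ℂ) =
      (((r : ℝ) ^ 2 : ℝ) : ℂ) * ((Complex.normSq a + Complex.normSq b : ℝ) : ℂ) := by
    push_cast
    simp only [Complex.normSq_eq_conj_mul_self]
    linear_combination
      (starRingEnd ℂ p₁ * starRingEnd ℂ a - starRingEnd ℂ p₂ * b) * h1 + (r * a) * c1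
      + (starRingEnd ℂ p₁ * starRingEnd ℂ b + starRingEnd ℂ p₂ * a) * h2 - (r * b) * c2
  exact mul_right_cancel₀ hne (by exact_mod_cast key)

/-- Two solutions `w, w'` of the same equation both conjugate `i·p / r` to `i`, so `w̄·w'`
commutes with `i`: its `j`-part vanishes. -/
lemma CoordEq.cross {p₁ p₂ : ℂ} {r : ℕ} (hr : r ≠ 0) {a b a' b' : ℂ}
    (h : CoordEq p₁ p₂ r a b) (h' : CoordEq p₁ p₂ r a' b') :
    (starRingEnd ℂ) a * b' - b * (starRingEnd ℂ) a' = 0 := by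
  obtain ⟨h1, h2⟩ := h
  obtain ⟨h1', h2'⟩ := h'
  have c1 := congrArg (starRingEnd ℂ) h1
  have c1' := congrArg (starRingEnd ℂ) h1'
  simp only [map_mul, map_sub, Complex.conj_conj, map_natCast] at c1 c1'
  have e1 : (p₁ + r) * ((starRingEnd ℂ) a * b' - b * (starRingEnd ℂ) a') = 0 := by
    linear_combination (starRingEnd ℂ) a * h2' - (starRingEnd ℂ) a' * h2
  have e2 : (starRingEnd ℂ p₁ - r) * ((starRingEnd ℂ) a * b' - b * (starRingEnd ℂ) a') = 0 := by
    linear_combination b' * c1 - b * c1'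
  by_contra hD
  -- Otherwise `p₁ = -r` and `p₁ = r`, impossible for `r > 0`.
  have f1 := (mul_eq_zero.mp e1).resolve_right hD
  have f2 := (mul_eq_zero.mp e2).resolve_right hD
  have c := congrArg (starRingEnd ℂ) f1
  simp only [map_add, map_natCast, map_zero] at c
  have : (r : ℂ) = 0 := by linear_combination (c - f2) / 2
  exact hr (by exact_mod_cast this)

/-! ### From eigenvectors to coordinate equations -/

lemma toQuat_re (a b : ℂ) : (toQuat a b).re = a.re := rfl

lemma toQuat_imI (a b : ℂ) : (toQuat a b).imI = a.im := rfl

lemma toQuat_imJ (a b : ℂ) : (toQuat a b).imJ = b.re := rfl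

lemma toQuat_imK (a b : ℂ) : (toQuat a b).imK = b.im := rfl

lemma upos_weight (m k : ℕ) (hk : k < m) :
    upos (2 * m - 1) (2 * m - 1 - 2 * k) = vkn (2 * m - 1) k := by
  rw [upos, if_pos (by omega)]
  congr 1
  omega

lemma uneg_weight (m k : ℕ) (hk : k < m) :
    uneg (2 * m - 1) (2 * m - 1 - 2 * k) = jvkn (2 * m - 1) k := by
  rw [uneg, if_pos (by omega)]
  congr 1
  omega

/-- Within one block, `H z = p·z` implies its coordinate equations, since `H` scales
`v_k` and `j·v_k` by `λ_k` and `-λ_k`. -/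
lemma coordEq_of_eigen (m : ℕ)
    (H : MvPolynomial (Fin 2) ℂ →ₗ[ℂ] MvPolynomial (Fin 2) ℂ)
    (hu : ∀ lam : ℕ, Odd lam → lam ≤ 2 * m - 1 →
      H (upos (2 * m - 1) lam) = (lam : ℂ) • upos (2 * m - 1) lam)
    (hju : ∀ lam : ℕ, Odd lam → lam ≤ 2 * m - 1 →
      H (uneg (2 * m - 1) lam) = (-(lam : ℂ)) • uneg (2 * m - 1) lam)
    (z : MvPolynomial (Fin 2) ℂ)
    (hz : z ∈ Submodule.span ℂ (Set.range fun k : Fin (2 * m) => vkn (2 * m - 1) (k : ℕ)))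
    (p : Quaternion ℝ) (hHz : H z = qmulB m p z) (l : ℕ) (hl : l < m) :
    CoordEq ((p.re : ℂ) + p.imI * Complex.I) ((p.imJ : ℂ) + p.imK * Complex.I)
      (2 * m - 1 - 2 * l) (innerVn (2 * m - 1) z (vkn (2 * m - 1) l))
      (innerVn (2 * m - 1) z (jvkn (2 * m - 1) l)) := by
  have hH : H z = ∑ k ∈ Finset.range m,
      ((((2 * m - 1 - 2 * k : ℕ) : ℂ) * innerVn (2 * m - 1) z (vkn (2 * m - 1) k)) •
          vkn (2 * m - 1) k +
        (-(((2 * m - 1 - 2 * k : ℕ) : ℂ) * innerVn (2 * m - 1) z (jvkn (2 * m - 1) k))) •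
          jvkn (2 * m - 1) k) := by
    conv_lhs => rw [expand m z hz]
    rw [map_sum]
    refine Finset.sum_congr rfl fun k hk => ?_
    have hk := Finset.mem_range.mp hk
    have hodd : Odd (2 * m - 1 - 2 * k) := ⟨m - 1 - k, by omega⟩
    have e1 := hu _ hodd (by omega)
    have e2 := hju _ hodd (by omega)
    rw [upos_weight m k hk] at e1
    rw [uneg_weight m k hk] at e2
    rw [map_add, map_smul, map_smul, e1, e2]
    module
  rw [hH] at hHz
  unfold qmulB at hHz
  have g1 := congrArg (fun f => innerVn (2 * m - 1) f (vkn (2 * m - 1) l)) hHz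
  have g2 := congrArg (fun f => innerVn (2 * m - 1) f (jvkn (2 * m - 1) l)) hHz
  rw [(coords m _ _ l hl).1, (coords m _ _ l hl).1] at g1
  rw [(coords m _ _ l hl).2, (coords m _ _ l hl).2] at g2
  exact ⟨g1.symm, g2.symm⟩

/-- If `H` acts blockwise on `V = ⊕_α V_{n_α}` with `H u_{λ,α} = λ u_{λ,α}`
and `H (j u_{λ,α}) = −λ (j u_{λ,α})`, and `z ∈ V` is nonzero with `H z = p·z` for a quaternion
`p`, then after multiplying `z` on the left by a unit quaternion `q`, the vector `q·z` lies in
the complex span of the `u_{λ₀,α}` for a single positive weight `λ₀` and satisfies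
`H(q·z) = λ₀·(q·z)`. -/
theorem statement7 (s : ℕ) (hs : 1 ≤ s) (m : Fin s → ℕ) (hm : ∀ α, 1 ≤ m α)
    (HL : Fin s → (MvPolynomial (Fin 2) ℂ →ₗ[ℂ] MvPolynomial (Fin 2) ℂ))
    (hHu : ∀ α, ∀ lam : ℕ, Odd lam → lam ≤ 2 * m α - 1 →
      HL α (upos (2 * m α - 1) lam) = (lam : ℂ) • upos (2 * m α - 1) lam)
    (hHju : ∀ α, ∀ lam : ℕ, Odd lam → lam ≤ 2 * m α - 1 →
      HL α (uneg (2 * m α - 1) lam) = (-(lam : ℂ)) • uneg (2 * m α - 1) lam)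
    (z : Fin s → MvPolynomial (Fin 2) ℂ) (hz : z ≠ 0)
    (hzV : ∀ α, z α ∈ Submodule.span ℂ
      (Set.range fun k : Fin (2 * m α) => vkn (2 * m α - 1) (k : ℕ)))
    (p : Quaternion ℝ)
    (hHz : ∀ α, HL α (z α) = qmulB (m α) p (z α)) :
    ∃ q : Quaternion ℝ, ‖q‖ = 1 ∧ ∃ lam0 : ℕ, Odd lam0 ∧ (∃ α, lam0 ≤ 2 * m α - 1) ∧
      (∀ α, ∃ c : ℂ, qmulB (m α) q (z α) = c • upos (2 * m α - 1) lam0) ∧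
      (∀ α, HL α (qmulB (m α) q (z α)) = (lam0 : ℂ) • qmulB (m α) q (z α)) := by
  have hC := fun α => coordEq_of_eigen (m α) (HL α) (hHu α) (hHju α) (z α) (hzV α) p (hHz α)
  obtain ⟨α₀, k₀, hk₀, hne⟩ : ∃ α k, k < m α ∧
      ¬ (innerVn (2 * m α - 1) (z α) (vkn (2 * m α - 1) k) = 0 ∧
        innerVn (2 * m α - 1) (z α) (jvkn (2 * m α - 1) k) = 0) := by
    by_contra! hcon
    apply hz
    funext α
    rw [expand (m α) (z α) (hzV α)]
    refine Finset.sum_eq_zero fun k hk => ?_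
    obtain ⟨h1, h2⟩ := hcon α k (Finset.mem_range.mp hk)
    rw [h1, h2, zero_smul, zero_smul, add_zero]
  have hC₀ := hC α₀ k₀ hk₀
  set r := 2 * m α₀ - 1 - 2 * k₀ with hr
  set a := innerVn (2 * m α₀ - 1) (z α₀) (vkn (2 * m α₀ - 1) k₀)
  set b := innerVn (2 * m α₀ - 1) (z α₀) (jvkn (2 * m α₀ - 1) k₀)
  have hrodd : Odd r := ⟨m α₀ - 1 - k₀, by omega⟩
  -- All nonzero coordinates have the same weight, namely `|p|`.
  have huniq : ∀ α k, k < m α → 2 * m α - 1 - 2 * k ≠ r →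
      innerVn (2 * m α - 1) (z α) (vkn (2 * m α - 1) k) = 0 ∧
        innerVn (2 * m α - 1) (z α) (jvkn (2 * m α - 1) k) = 0 := by
    intro α k hk hkr
    by_contra h0
    have e := ((hC α k hk).normSq h0).symm.trans (hC₀.normSq hne)
    have e' : (2 * m α - 1 - 2 * k) ^ 2 = r ^ 2 := by exact_mod_cast e
    exact hkr (Nat.pow_left_injective (n := 2) (by norm_num) e')
  -- The unit quaternion is the normalized conjugate of the nonzero coordinate `a + b·j`.
  have hw : toQuat a b ≠ 0 := by
    intro h
    have h1 := congrArg QuaternionAlgebra.re h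
    have h2 := congrArg QuaternionAlgebra.imI h
    have h3 := congrArg QuaternionAlgebra.imJ h
    have h4 := congrArg QuaternionAlgebra.imK h
    exact hne ⟨Complex.ext h1 h2, Complex.ext h3 h4⟩
  set t : ℝ := ‖toQuat a b‖⁻¹ with ht
  have hq1 : (((t • star (toQuat a b)).re : ℂ) + (t • star (toQuat a b)).imI * Complex.I)
      = t * (starRingEnd ℂ) a := by
    apply Complex.ext <;> simp [toQuat_re, toQuat_imI]
  have hq2 : (((t • star (toQuat a b)).imJ : ℂ) + (t • star (toQuat a b)).imK * Complex.I)
      = -(t * b) := by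
    apply Complex.ext <;> simp [toQuat_imJ, toQuat_imK]
  have hspan : ∀ α, ∃ c : ℂ, qmulB (m α) (t • star (toQuat a b)) (z α) =
      c • upos (2 * m α - 1) r := by
    intro α
    by_cases hle : r ≤ 2 * m α - 1
    · obtain ⟨d, hd⟩ := hrodd
      obtain ⟨k, hk, hkr⟩ : ∃ k, k < m α ∧ 2 * m α - 1 - 2 * k = r :=
        ⟨m α - 1 - d, by have := hm α; omega, by omega⟩
      have hk' := hC α k hk
      rw [hkr] at hk'
      have hcross := hC₀.cross (by omega) hk'
      rw [← hkr, upos_weight (m α) k hk]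
      unfold qmulB
      rw [Finset.sum_eq_single_of_mem k (Finset.mem_range.mpr hk)]
      · rw [hq1, hq2]
        rw [show ((t : ℂ) * (starRingEnd ℂ) a * innerVn (2 * m α - 1) (z α)
            (jvkn (2 * m α - 1) k) + -((t : ℂ) * b) * (starRingEnd ℂ)
            (innerVn (2 * m α - 1) (z α) (vkn (2 * m α - 1) k))) = 0 by
          linear_combination (t : ℂ) * hcross, zero_smul, add_zero]
        exact ⟨_, rfl⟩
      · intro l hl hlk
        have hl := Finset.mem_range.mp hl
        obtain ⟨h1, h2⟩ := huniq α l hl (by omega)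
        simp [h1, h2]
    · refine ⟨0, ?_⟩
      unfold qmulB
      rw [zero_smul]
      refine Finset.sum_eq_zero fun l hl => ?_
      obtain ⟨h1, h2⟩ := huniq α l (Finset.mem_range.mp hl) (by omega)
      simp [h1, h2]
  refine ⟨t • star (toQuat a b), ?_, r, hrodd, ⟨α₀, by omega⟩, hspan, ?_⟩
  · rw [norm_smul, norm_star, ht, norm_inv, norm_norm, inv_mul_cancel₀ (norm_ne_zero_iff.mpr hw)]
  · intro α
    obtain ⟨c, hc⟩ := hspan α
    rw [hc, map_smul]
    by_cases hle : r ≤ 2 * m α - 1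
    · rw [hHu α r hrodd hle, smul_comm]
    · rw [upos, if_neg hle]
      simp
end

section
/- Let s ≥ 1, let m₁, …, m_s be positive integers, let c₁, …, c_s be nonzero complex numbers, let ℓ' be a real number and p₁ a complex number, and suppose that for every α: m_α²·c_α + (−1)^{m_α}·ℓ'·m_α·conj(c_α) = p₁·c_α. Then the set {m₁, …, m_s} contains at most two distinct values; indeed each m_α² is a root of the real quadratic x² − (ℓ'² + 2·Re(p₁))·x + |p₁|² = 0. -/
/-!
The hypothesis says `(p₁ - m_α²) c_α = ± ℓ' m_α conj(c_α)`. Taking squared norms and cancelling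
`|c_α|² ≠ 0` gives `|p₁ - m_α²|² = ℓ'² m_α²`, which expands to the quadratic. Its coefficients do
not depend on `α`, so by Vieta any two distinct values `m_α² ≠ m_β²` sum to `ℓ'² + 2 Re p₁`, and
squaring is injective on `ℕ`, so a third value is impossible.
-/

open scoped BigOperators Matrix
open MvPolynomial

/-- Vieta: distinct squares that are both roots of `x² - S x + P` sum to `S`. -/
lemma sq_add_sq_of_roots {a b : ℕ} {S P : ℝ} (hab : a ≠ b)
    (ha : ((a : ℝ) ^ 2) ^ 2 - S * (a : ℝ) ^ 2 + P = 0)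
    (hb : ((b : ℝ) ^ 2) ^ 2 - S * (b : ℝ) ^ 2 + P = 0) : (a : ℝ) ^ 2 + (b : ℝ) ^ 2 = S := by
  have hne : (a : ℝ) ^ 2 - (b : ℝ) ^ 2 ≠ 0 := by
    intro h0
    have h1 : (a : ℝ) ^ 2 = (b : ℝ) ^ 2 := by linarith
    have h2 : a ^ 2 = b ^ 2 := by exact_mod_cast h1
    exact hab (Nat.pow_left_injective (n := 2) (by norm_num) h2)
  apply mul_left_cancel₀ hne
  linear_combination ha - hb

/-- If `m_α²·c_α + (−1)^{m_α}·ℓ'·m_α·conj(c_α) = p₁·c_α` with all `c_α ≠ 0`,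
then each `m_α²` is a root of `x² − (ℓ'² + 2 Re p₁)x + |p₁|² = 0`; in particular the `m_α` take
at most two distinct values. -/
theorem statement11 (s : ℕ) (hs : 1 ≤ s) (m : Fin s → ℕ) (hm : ∀ α, 1 ≤ m α)
    (c : Fin s → ℂ) (hc : ∀ α, c α ≠ 0) (l' : ℝ) (p₁ : ℂ)
    (h : ∀ α, (m α : ℂ) ^ 2 * c α +
      (-1 : ℂ) ^ (m α) * (l' : ℂ) * (m α : ℂ) * (starRingEnd ℂ) (c α) = p₁ * c α) :
    (∀ α, ((m α : ℝ) ^ 2) ^ 2 - (l' ^ 2 + 2 * p₁.re) * (m α : ℝ) ^ 2 + Complex.normSq p₁ = 0) ∧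
      ∃ v₁ v₂ : ℕ, ∀ α, m α = v₁ ∨ m α = v₂ := by
  have hroot : ∀ α, ((m α : ℝ) ^ 2) ^ 2 - (l' ^ 2 + 2 * p₁.re) * (m α : ℝ) ^ 2
      + Complex.normSq p₁ = 0 := by
    intro α
    have h1 : (p₁ - (((m α : ℝ) ^ 2 : ℝ) : ℂ)) * c α =
        (-1 : ℂ) ^ (m α) * (l' : ℂ) * ((m α : ℝ) : ℂ) * (starRingEnd ℂ) (c α) := by
      push_cast
      linear_combination -(h α)
    have h2 := congrArg Complex.normSq h1
    simp only [map_mul, map_pow, Complex.normSq_neg, Complex.normSq_one, one_pow, one_mul,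
      Complex.normSq_conj, Complex.normSq_ofReal] at h2
    have h3 := mul_right_cancel₀ (Complex.normSq_pos.mpr (hc α)).ne' h2
    rw [Complex.normSq_apply, Complex.sub_re, Complex.sub_im, Complex.ofReal_re,
      Complex.ofReal_im] at h3
    rw [Complex.normSq_apply]
    linear_combination h3
  refine ⟨hroot, ?_⟩
  let i : Fin s := ⟨0, hs⟩
  by_cases hall : ∀ α, m α = m i
  · exact ⟨m i, m i, fun α => Or.inl (hall α)⟩
  · push Not at hall
    obtain ⟨β, hβ⟩ := hall
    refine ⟨m i, m β, fun γ => ?_⟩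
    by_contra! hγ
    have e1 := sq_add_sq_of_roots hβ (hroot β) (hroot i)
    have e2 := sq_add_sq_of_roots hγ.1 (hroot γ) (hroot i)
    have e3 : (m γ : ℝ) ^ 2 = (m β : ℝ) ^ 2 := by linarith
    have e4 : m γ ^ 2 = m β ^ 2 := by exact_mod_cast e3
    exact hγ.2 (Nat.pow_left_injective (n := 2) (by norm_num) e4)
end

section
/- Let s ≥ 1, let a > 0 be real, p₁ ∈ ℂ, and let c = (c₁, …, c_s) ∈ ℂ^s satisfy Σ_α |c_α|² = 1 and S := Σ_α c_α² ∈ ℝ. If (a² − p₁)·c_α = a²·S·conj(c_α) for every α, then p₁·S = 0; moreover, if S ≠ 0 then p₁ = 0, S ∈ {1, −1}, and c_α = S·conj(c_α) for every α (so every c_α is real when S = 1, and every c_α is purely imaginary when S = −1). -/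
/-!
Pairing the vector equation `(a² - p₁) c = a² S conj c` with `c` under the bilinear form
and using `∑ |c_α|² = 1` gives `(a² - p₁) S = a² S`, that is `p₁ S = 0`. If `S ≠ 0`, then `p₁ = 0`
and dividing by `a²` leaves `c = S conj c`; pairing this with `conj c` gives
`1 = S · conj S = S²`, since `S` is real.
-/

open scoped BigOperators Matrix
open MvPolynomial

/-- Let `a > 0`, `∑|c_α|² = 1`, `S := ∑ c_α²` real. If
`(a² − p₁)c_α = a²·S·conj(c_α)` for all `α`, then `p₁·S = 0`; and if `S ≠ 0` then `p₁ = 0`,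
`S ∈ {1, −1}`, and `c_α = S·conj(c_α)` for all `α`. -/
theorem statement12 (s : ℕ) (hs : 1 ≤ s) (a : ℝ) (ha : 0 < a) (p₁ : ℂ)
    (c : Fin s → ℂ) (hnorm : ∑ α, Complex.normSq (c α) = 1)
    (hSreal : (∑ α, (c α) ^ 2).im = 0)
    (h : ∀ α, ((a : ℂ) ^ 2 - p₁) * c α
      = (a : ℂ) ^ 2 * (∑ β, (c β) ^ 2) * (starRingEnd ℂ) (c α)) :
    p₁ * (∑ α, (c α) ^ 2) = 0 ∧
      ((∑ α, (c α) ^ 2) ≠ 0 → p₁ = 0 ∧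
        ((∑ α, (c α) ^ 2) = 1 ∨ (∑ α, (c α) ^ 2) = -1) ∧
        ∀ α, c α = (∑ β, (c β) ^ 2) * (starRingEnd ℂ) (c α)) := by
  have hN : ∑ α, (starRingEnd ℂ) (c α) * c α = 1 := by
    have h1 : ((∑ α, Complex.normSq (c α) : ℝ) : ℂ) = 1 := by rw [hnorm]; simp
    rw [← h1, Complex.ofReal_sum]
    exact Finset.sum_congr rfl fun α _ => Complex.normSq_eq_conj_mul_self.symm
  have hconj : (starRingEnd ℂ) (∑ α, (c α) ^ 2) = ∑ α, (c α) ^ 2 :=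
    Complex.conj_eq_iff_im.mpr hSreal
  have hconj_sum : ∑ α, ((starRingEnd ℂ) (c α)) ^ 2 = ∑ α, (c α) ^ 2 := by
    rw [← hconj, map_sum]
    simp only [map_pow]
  have ha2 : (a : ℂ) ^ 2 ≠ 0 := pow_ne_zero 2 (Complex.ofReal_ne_zero.mpr ha.ne')
  obtain ⟨S, hS⟩ : ∃ S, ∑ α, (c α) ^ 2 = S := ⟨_, rfl⟩
  simp only [hS] at h hconj_sum ⊢
  -- Contracting the hypothesis with `c` gives `(a² - p₁) S = a² S`.
  have hcontract : ((a : ℂ) ^ 2 - p₁) * S = (a : ℂ) ^ 2 * S := by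
    calc ((a : ℂ) ^ 2 - p₁) * S = ∑ α, ((a : ℂ) ^ 2 - p₁) * c α * c α := by
          rw [← hS, Finset.mul_sum]
          exact Finset.sum_congr rfl fun α _ => by ring
      _ = ∑ α, (a : ℂ) ^ 2 * S * ((starRingEnd ℂ) (c α) * c α) :=
          Finset.sum_congr rfl fun α _ => by rw [h α]; ring
      _ = (a : ℂ) ^ 2 * S := by rw [← Finset.mul_sum, hN, mul_one]
  have hpS : p₁ * S = 0 := by linear_combination -hcontract
  refine ⟨hpS, fun hS0 => ?_⟩
  have hp : p₁ = 0 := (mul_eq_zero.mp hpS).resolve_right hS0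
  have hc : ∀ α, c α = S * (starRingEnd ℂ) (c α) := fun α => by
    apply mul_left_cancel₀ ha2
    have hα := h α
    rw [hp] at hα
    linear_combination hα
  refine ⟨hp, ?_, hc⟩
  -- Contracting `c = S · conj c` with `conj c` gives `1 = S · conj S = S²`.
  have hsq : S ^ 2 = 1 := by
    calc S ^ 2 = ∑ α, S * ((starRingEnd ℂ) (c α)) ^ 2 := by
          rw [← Finset.mul_sum, hconj_sum, sq]
      _ = ∑ α, (starRingEnd ℂ) (c α) * c α :=
          Finset.sum_congr rfl fun α _ => by
            linear_combination -(starRingEnd ℂ) (c α) * hc α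
      _ = 1 := hN
  simpa using sq_eq_sq_iff_eq_or_eq_neg.mp (hsq.trans (one_pow 2).symm)
end

section
/- Let m₁ ≠ m₂ be positive integers, s₁, s₂ ≥ 1, let c₁, …, c_{s₁} and d₁, …, d_{s₂} be nonzero complex numbers with Σ_α |c_α|² + Σ_β |d_β|² = 1, suppose the number ℓ' := (−1)^{m₁+1}·m₁·Σ_α c_α² + (−1)^{m₂+1}·m₂·Σ_β d_β² is real, and let p₁ ∈ ℂ satisfy (m₁² − p₁)·c_α = (−1)^{m₁+1}·ℓ'·m₁·conj(c_α) for all α and (m₂² − p₁)·d_β = (−1)^{m₂+1}·ℓ'·m₂·conj(d_β) for all β. Then ℓ' ≠ 0, and p₁ is real with p₁ = m₁²·Σ_α |c_α|² + m₂²·Σ_β |d_β|² − ℓ'². -/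
/-!
If `ℓ' = 0`, one equation from each block gives `m₁² = p₁ = m₂²`, contradicting `m₁ ≠ m₂`.
For the formula, multiply each equation by the conjugate of its coefficient and add them all up:
by the normalisation the left side becomes `m₁² ∑ |c_α|² + m₂² ∑ |d_β|² - p₁`, and the right side
is `ℓ' * conj ℓ' = ℓ'²` because `ℓ'` is real. Every term of the formula is then real, so `p₁` is.
-/

open scoped BigOperators Matrix
open MvPolynomial

/-- `ℓ' = (−1)^{m₁+1}·m₁·∑ c_α² + (−1)^{m₂+1}·m₂·∑ d_β²`. -/
noncomputable def ellC (m₁ m₂ : ℕ) {s₁ s₂ : ℕ} (c : Fin s₁ → ℂ) (d : Fin s₂ → ℂ) : ℂ :=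
  (-1 : ℂ) ^ (m₁ + 1) * (m₁ : ℂ) * (∑ α, (c α) ^ 2)
    + (-1 : ℂ) ^ (m₂ + 1) * (m₂ : ℂ) * ∑ β, (d β) ^ 2

/-- One block of the minimality equations, paired with the conjugates of its coefficients. -/
lemma block_sum (m s : ℕ) (c : Fin s → ℂ) (l p : ℂ)
    (h : ∀ α, ((m : ℂ) ^ 2 - p) * c α
      = (-1 : ℂ) ^ (m + 1) * l * (m : ℂ) * (starRingEnd ℂ) (c α)) :
    ((m : ℂ) ^ 2 - p) * ∑ α, (Complex.normSq (c α) : ℂ)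
      = l * (starRingEnd ℂ) ((-1 : ℂ) ^ (m + 1) * (m : ℂ) * ∑ α, (c α) ^ 2) := by
  simp only [map_mul, map_pow, map_neg, map_one, map_natCast, map_sum, Finset.mul_sum]
  refine Finset.sum_congr rfl fun α _ => ?_
  rw [← Complex.mul_conj]
  linear_combination (starRingEnd ℂ) (c α) * h α

/-- If `l = 0`, an equation with nonzero coefficient forces `p = m²`. -/
lemma sq_eq_of_l_eq_zero (m : ℕ) (z l p : ℂ) (hz : z ≠ 0) (hl : l = 0)
    (h : ((m : ℂ) ^ 2 - p) * z = (-1 : ℂ) ^ (m + 1) * l * (m : ℂ) * (starRingEnd ℂ) z) :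
    (m : ℂ) ^ 2 = p := by
  rw [hl] at h
  simp only [mul_zero, zero_mul] at h
  exact sub_eq_zero.mp ((mul_eq_zero.mp h).resolve_right hz)

/-- In case (II.II) of the paper: with `m₁ ≠ m₂`, nonzero coefficients,
`∑|c|² + ∑|d|² = 1` and `ℓ'` real, the minimality equations force `ℓ' ≠ 0` and `p₁` real with
`p₁ = m₁²∑|c|² + m₂²∑|d|² − ℓ'²`. -/
theorem statement13 (m₁ m₂ : ℕ) (hm₁ : 1 ≤ m₁) (hm₂ : 1 ≤ m₂) (hne : m₁ ≠ m₂)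
    (s₁ s₂ : ℕ) (hs₁ : 1 ≤ s₁) (hs₂ : 1 ≤ s₂)
    (c : Fin s₁ → ℂ) (d : Fin s₂ → ℂ) (hc : ∀ α, c α ≠ 0) (hd : ∀ β, d β ≠ 0)
    (hnorm : (∑ α, Complex.normSq (c α)) + (∑ β, Complex.normSq (d β)) = 1)
    (hreal : (ellC m₁ m₂ c d).im = 0) (p₁ : ℂ)
    (h1 : ∀ α, ((m₁ : ℂ) ^ 2 - p₁) * c α
      = (-1 : ℂ) ^ (m₁ + 1) * ellC m₁ m₂ c d * (m₁ : ℂ) * (starRingEnd ℂ) (c α))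
    (h2 : ∀ β, ((m₂ : ℂ) ^ 2 - p₁) * d β
      = (-1 : ℂ) ^ (m₂ + 1) * ellC m₁ m₂ c d * (m₂ : ℂ) * (starRingEnd ℂ) (d β)) :
    ellC m₁ m₂ c d ≠ 0 ∧ p₁.im = 0 ∧
      p₁ = (m₁ : ℂ) ^ 2 * (∑ α, (Complex.normSq (c α) : ℂ))
        + (m₂ : ℂ) ^ 2 * (∑ β, (Complex.normSq (d β) : ℂ)) - (ellC m₁ m₂ c d) ^ 2 := by
  have hconj : (starRingEnd ℂ) (ellC m₁ m₂ c d) = ellC m₁ m₂ c d :=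
    Complex.conj_eq_iff_im.mpr hreal
  have hnormC : (∑ α, (Complex.normSq (c α) : ℂ)) + (∑ β, (Complex.normSq (d β) : ℂ)) = 1 := by
    exact_mod_cast hnorm
  have hp : p₁ = (m₁ : ℂ) ^ 2 * (∑ α, (Complex.normSq (c α) : ℂ))
      + (m₂ : ℂ) ^ 2 * (∑ β, (Complex.normSq (d β) : ℂ)) - (ellC m₁ m₂ c d) ^ 2 := by
    have e1 := block_sum m₁ s₁ c _ p₁ h1
    have e2 := block_sum m₂ s₂ d _ p₁ h2
    have e3 : (starRingEnd ℂ) ((-1 : ℂ) ^ (m₁ + 1) * (m₁ : ℂ) * ∑ α, (c α) ^ 2)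
        + (starRingEnd ℂ) ((-1 : ℂ) ^ (m₂ + 1) * (m₂ : ℂ) * ∑ β, (d β) ^ 2)
        = ellC m₁ m₂ c d := by
      rw [← map_add]
      exact hconj
    linear_combination (-1 : ℂ) * e1 - e2 - p₁ * hnormC - ellC m₁ m₂ c d * e3
  refine ⟨fun hl => hne ?_, ?_, hp⟩
  · have e1 := sq_eq_of_l_eq_zero m₁ _ _ p₁ (hc ⟨0, hs₁⟩) hl (h1 _)
    have e2 := sq_eq_of_l_eq_zero m₂ _ _ p₁ (hd ⟨0, hs₂⟩) hl (h2 _)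
    have e3 : m₁ ^ 2 = m₂ ^ 2 := by exact_mod_cast e1.trans e2.symm
    exact Nat.pow_left_injective two_ne_zero e3
  · rw [← Complex.conj_eq_iff_im, hp]
    simp only [map_sub, map_add, map_mul, map_pow, map_natCast, map_sum, Complex.conj_ofReal,
      hconj]
end

section
/- Let m₁ < m₂ be positive integers, s₁, s₂ ≥ 1, let c₁, …, c_{s₁} and d₁, …, d_{s₂} be nonzero REAL numbers with Σ_α c_α² + Σ_β d_β² = 1, set ℓ' := (−1)^{m₁+1}·m₁·Σ_α c_α² + (−1)^{m₂+1}·m₂·Σ_β d_β², and suppose p₁ ∈ ℂ satisfies (m₁² − p₁)·c_α = (−1)^{m₁+1}·ℓ'·m₁·c_α for all α and (m₂² − p₁)·d_β = (−1)^{m₂+1}·ℓ'·m₂·d_β for all β. Then m₁ + m₂ is odd, Σ_α c_α² = m₁/(m₁+m₂), Σ_β d_β² = m₂/(m₁+m₂), ℓ' = (−1)^{m₁+1}·(m₁ − m₂), and p₁ = m₁·m₂. -/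
/-!
Write `C = ∑ c_α²`, `D = ∑ d_β²`, `εᵢ = (-1)^(mᵢ+1)`. Cancelling one nonzero coefficient in each
family gives `m₁² - p₁ = ε₁ ℓ' m₁` and `m₂² - p₁ = ε₂ ℓ' m₂`, whose difference
`m₂² - m₁² = ℓ' (ε₂ m₂ - ε₁ m₁)` is a real equation without `p₁`.

If `ε₁ = ε₂`, it yields `m₁ + m₂ = ε₁ ℓ' = m₁ C + m₂ D`, which is impossible because a convex
combination of `m₁ < m₂` is at most `m₂`. So `ε₂ = -ε₁`, hence `ℓ' = ε₁ (m₁ - m₂)`, that is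
`m₁ C - m₂ D = m₁ - m₂`; with `C + D = 1` this determines `C` and `D`, and
`p₁ = m₁² - ε₁ ℓ' m₁ = m₁ m₂`.
-/

open scoped BigOperators Matrix
open MvPolynomial

/-- `ℓ' = (−1)^{m₁+1}·m₁·∑ c_α² + (−1)^{m₂+1}·m₂·∑ d_β²` for real coefficients. -/
noncomputable def ellR (m₁ m₂ : ℕ) {s₁ s₂ : ℕ} (c : Fin s₁ → ℝ) (d : Fin s₂ → ℝ) : ℝ :=
  (-1 : ℝ) ^ (m₁ + 1) * (m₁ : ℝ) * (∑ α, (c α) ^ 2)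
    + (-1 : ℝ) ^ (m₂ + 1) * (m₂ : ℝ) * ∑ β, (d β) ^ 2

/-- With all coefficients real and nonzero, `∑c² + ∑d² = 1`, and the
minimality equations, one gets: `m₁ + m₂` odd, `∑c² = m₁/(m₁+m₂)`, `∑d² = m₂/(m₁+m₂)`,
`ℓ' = (−1)^{m₁+1}(m₁ − m₂)`, and `p₁ = m₁m₂`. -/
theorem statement14 (m₁ m₂ : ℕ) (hm₁ : 1 ≤ m₁) (h12 : m₁ < m₂)
    (s₁ s₂ : ℕ) (hs₁ : 1 ≤ s₁) (hs₂ : 1 ≤ s₂)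
    (c : Fin s₁ → ℝ) (d : Fin s₂ → ℝ) (hc : ∀ α, c α ≠ 0) (hd : ∀ β, d β ≠ 0)
    (hnorm : (∑ α, (c α) ^ 2) + (∑ β, (d β) ^ 2) = 1) (p₁ : ℂ)
    (h1 : ∀ α, ((m₁ : ℂ) ^ 2 - p₁) * (c α : ℂ)
      = (-1 : ℂ) ^ (m₁ + 1) * ((ellR m₁ m₂ c d : ℝ) : ℂ) * (m₁ : ℂ) * (c α : ℂ))
    (h2 : ∀ β, ((m₂ : ℂ) ^ 2 - p₁) * (d β : ℂ)
      = (-1 : ℂ) ^ (m₂ + 1) * ((ellR m₁ m₂ c d : ℝ) : ℂ) * (m₂ : ℂ) * (d β : ℂ)) :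
    Odd (m₁ + m₂) ∧
      (∑ α, (c α) ^ 2) = (m₁ : ℝ) / (m₁ + m₂) ∧
      (∑ β, (d β) ^ 2) = (m₂ : ℝ) / (m₁ + m₂) ∧
      ellR m₁ m₂ c d = (-1 : ℝ) ^ (m₁ + 1) * ((m₁ : ℝ) - (m₂ : ℝ)) ∧
      p₁ = (m₁ : ℂ) * (m₂ : ℂ) := by
  have e1 : ((m₁ : ℂ) ^ 2 - p₁)
      = (-1 : ℂ) ^ (m₁ + 1) * ((ellR m₁ m₂ c d : ℝ) : ℂ) * (m₁ : ℂ) :=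
    mul_right_cancel₀ (Complex.ofReal_ne_zero.mpr (hc ⟨0, hs₁⟩)) (h1 ⟨0, hs₁⟩)
  have e2 : ((m₂ : ℂ) ^ 2 - p₁)
      = (-1 : ℂ) ^ (m₂ + 1) * ((ellR m₁ m₂ c d : ℝ) : ℂ) * (m₂ : ℂ) :=
    mul_right_cancel₀ (Complex.ofReal_ne_zero.mpr (hd ⟨0, hs₂⟩)) (h2 ⟨0, hs₂⟩)
  have hdiff : (m₂ : ℝ) ^ 2 - (m₁ : ℝ) ^ 2 = ellR m₁ m₂ c d *
      ((-1 : ℝ) ^ (m₂ + 1) * m₂ - (-1 : ℝ) ^ (m₁ + 1) * m₁) := by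
    have h : (m₂ : ℂ) ^ 2 - (m₁ : ℂ) ^ 2 = ((ellR m₁ m₂ c d : ℝ) : ℂ) *
        ((-1 : ℂ) ^ (m₂ + 1) * m₂ - (-1 : ℂ) ^ (m₁ + 1) * m₁) := by
      linear_combination e2 - e1
    exact_mod_cast h
  have hell : ellR m₁ m₂ c d = (-1 : ℝ) ^ (m₁ + 1) * (m₁ : ℝ) * (∑ α, (c α) ^ 2)
    + (-1 : ℝ) ^ (m₂ + 1) * (m₂ : ℝ) * ∑ β, (d β) ^ 2 := rfl
  have hC : 0 ≤ ∑ α, (c α) ^ 2 := Finset.sum_nonneg fun _ _ => sq_nonneg _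
  generalize ellR m₁ m₂ c d = l at *
  generalize (∑ α, (c α) ^ 2) = C at *
  generalize (∑ β, (d β) ^ 2) = D at *
  have hD : D = 1 - C := by linarith
  subst hD
  have hm₁' : (0 : ℝ) < m₁ := by exact_mod_cast hm₁
  have hlt : (m₁ : ℝ) < m₂ := by exact_mod_cast h12
  have hsq : ((-1 : ℝ) ^ (m₁ + 1)) * (-1 : ℝ) ^ (m₁ + 1) = 1 := by
    rw [← mul_pow]; norm_num
  have hodd : Odd (m₁ + m₂) := by
    by_contra hne
    have hsign : (-1 : ℝ) ^ (m₂ + 1) = (-1 : ℝ) ^ (m₁ + 1) :=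
      neg_one_pow_congr (by grind)
    rw [hsign] at hdiff hell
    generalize (-1 : ℝ) ^ (m₁ + 1) = e at *
    have hprod : ((m₂ : ℝ) - m₁) * (m₂ + m₁) = (m₂ - m₁) * (m₁ * C + m₂ * (1 - C)) := by
      rw [hell] at hdiff
      linear_combination hdiff + (m₂ - m₁) * (m₁ * C + m₂ * (1 - C)) * hsq
    have hsum := mul_left_cancel₀ (sub_ne_zero.mpr hlt.ne') hprod
    nlinarith
  have hsign : (-1 : ℝ) ^ (m₂ + 1) = -(-1 : ℝ) ^ (m₁ + 1) := by
    rcases Nat.even_or_odd m₁ with h | h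
    · have h' : Odd m₂ := by grind
      rw [h.add_one.neg_one_pow, h'.add_one.neg_one_pow, neg_neg]
    · have h' : Even m₂ := by grind
      rw [h.add_one.neg_one_pow, h'.add_one.neg_one_pow]
  rw [hsign] at hdiff hell
  have hl : l = (-1 : ℝ) ^ (m₁ + 1) * ((m₁ : ℝ) - m₂) := by
    have hpos : (m₁ : ℝ) + m₂ ≠ 0 := by linarith
    generalize (-1 : ℝ) ^ (m₁ + 1) = e at *
    apply mul_left_cancel₀ hpos
    linear_combination e * hdiff - l * (m₁ + m₂) * hsq
  have hCval : C * ((m₁ : ℝ) + m₂) = m₁ := by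
    generalize (-1 : ℝ) ^ (m₁ + 1) = e at *
    linear_combination e * hl - e * hell + (m₁ - m₂ - (m₁ * C - m₂ * (1 - C))) * hsq
  have hpos : (m₁ : ℝ) + m₂ ≠ 0 := by linarith
  refine ⟨hodd, ?_, ?_, hl, ?_⟩
  · rw [eq_div_iff hpos, hCval]
  · rw [eq_div_iff hpos]
    linarith
  · have hsqC : ((-1 : ℂ) ^ (m₁ + 1)) * (-1 : ℂ) ^ (m₁ + 1) = 1 := by exact_mod_cast hsq
    have hlC : (l : ℂ) = (-1 : ℂ) ^ (m₁ + 1) * ((m₁ : ℂ) - m₂) := by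
      exact_mod_cast congrArg Complex.ofReal hl
    rw [hlC] at e1
    linear_combination -e1 - (m₁ - m₂) * m₁ * hsqC
end

section
/- Let m₁ < m₂ be positive integers, s₁, s₂ ≥ 1, let c₁, …, c_{s₁} be nonzero real numbers and d₁, …, d_{s₂} nonzero purely imaginary complex numbers with Σ_α |c_α|² + Σ_β |d_β|² = 1, set ℓ' := (−1)^{m₁+1}·m₁·Σ_α c_α² + (−1)^{m₂+1}·m₂·Σ_β d_β² (which is real), and suppose p₁ ∈ ℂ satisfies (m₁² − p₁)·c_α = (−1)^{m₁+1}·ℓ'·m₁·conj(c_α) for all α and (m₂² − p₁)·d_β = (−1)^{m₂+1}·ℓ'·m₂·conj(d_β) for all β. Then m₁ + m₂ is even, Σ_α c_α² = m₁/(m₁+m₂), Σ_β d_β² = −m₂/(m₁+m₂), ℓ' = (−1)^{m₁+1}·(m₁ − m₂), and p₁ = m₁·m₂. -/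
/-!
Write `C = ∑ c_α²`, `D = ∑ |d_β|²` and `e_i = (-1)^(m_i+1)`. Since `conj c = c` and `conj d = -d`, one
has `∑ d_β² = -D`, `C + D = 1`, and cancelling one nonzero `c_α` and one nonzero `d_β` leaves
`m₁² - p₁ = e₁ ℓ' m₁` and `m₂² - p₁ = -e₂ ℓ' m₂`. Subtracting gives
`m₂² - m₁² = -ℓ' (e₁ m₁ + e₂ m₂)`.

If `e₁ = e₂`, dividing by `m₁ + m₂` gives `e₁ ℓ' = m₁ - m₂`, and everything else is linear algebra.
If `e₂ = -e₁`, dividing by `m₂ - m₁` gives `e₁ ℓ' = m₁ + m₂`, whereas `e₁ ℓ' = m₁ C + m₂ D` by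
definition; hence `m₁ D + m₂ C = 0`, contradicting positivity.
-/

open scoped BigOperators Matrix
open MvPolynomial

/-- With `c_α` real nonzero, `d_β` purely imaginary nonzero,
`∑|c|² + ∑|d|² = 1`, and the minimality equations, one gets: `m₁ + m₂` even,
`∑c² = m₁/(m₁+m₂)`, `∑d² = −m₂/(m₁+m₂)`, `ℓ' = (−1)^{m₁+1}(m₁ − m₂)`, and `p₁ = m₁m₂`. -/
theorem statement15 (m₁ m₂ : ℕ) (hm₁ : 1 ≤ m₁) (h12 : m₁ < m₂)
    (s₁ s₂ : ℕ) (hs₁ : 1 ≤ s₁) (hs₂ : 1 ≤ s₂)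
    (c : Fin s₁ → ℝ) (d : Fin s₂ → ℂ) (hc : ∀ α, c α ≠ 0)
    (hd : ∀ β, d β ≠ 0 ∧ (d β).re = 0)
    (hnorm : (∑ α, (c α) ^ 2) + (∑ β, Complex.normSq (d β)) = 1) (p₁ : ℂ)
    (h1 : ∀ α, ((m₁ : ℂ) ^ 2 - p₁) * (c α : ℂ)
      = (-1 : ℂ) ^ (m₁ + 1) * ellC m₁ m₂ (fun α => ((c α : ℝ) : ℂ)) d * (m₁ : ℂ) *
          (starRingEnd ℂ) ((c α : ℝ) : ℂ))
    (h2 : ∀ β, ((m₂ : ℂ) ^ 2 - p₁) * d β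
      = (-1 : ℂ) ^ (m₂ + 1) * ellC m₁ m₂ (fun α => ((c α : ℝ) : ℂ)) d * (m₂ : ℂ) *
          (starRingEnd ℂ) (d β)) :
    Even (m₁ + m₂) ∧
      (∑ α, (c α) ^ 2) = (m₁ : ℝ) / (m₁ + m₂) ∧
      (∑ β, (d β) ^ 2) = -((m₂ : ℂ) / ((m₁ : ℂ) + (m₂ : ℂ))) ∧
      ellC m₁ m₂ (fun α => ((c α : ℝ) : ℂ)) d = (-1 : ℂ) ^ (m₁ + 1) * ((m₁ : ℂ) - (m₂ : ℂ)) ∧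
      p₁ = (m₁ : ℂ) * (m₂ : ℂ) := by
  set ℓ := ellC m₁ m₂ (fun α => ((c α : ℝ) : ℂ)) d with hℓ
  set C : ℝ := ∑ α, (c α) ^ 2 with hC
  set D : ℝ := ∑ β, Complex.normSq (d β) with hD
  have hconj : ∀ β, (starRingEnd ℂ) (d β) = -d β := fun β => by
    apply Complex.ext <;> simp [(hd β).2]
  have hsumd : ∑ β, (d β) ^ 2 = -(D : ℂ) := by
    rw [hD, Complex.ofReal_sum, ← Finset.sum_neg_distrib]
    refine Finset.sum_congr rfl fun β _ => ?_
    rw [Complex.normSq_eq_conj_mul_self, hconj]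
    ring
  have hCpos : 0 < C :=
    Finset.sum_pos (fun α _ => by have := hc α; positivity) ⟨⟨0, hs₁⟩, Finset.mem_univ _⟩
  have hDnonneg : 0 ≤ D := Finset.sum_nonneg fun β _ => Complex.normSq_nonneg _
  have hdef : ℓ = (-1 : ℂ) ^ (m₁ + 1) * m₁ * C - (-1 : ℂ) ^ (m₂ + 1) * m₂ * D := by
    rw [hℓ, ellC, hsumd, hC]
    push_cast
    ring
  have k1 : (m₁ : ℂ) ^ 2 - p₁ = (-1 : ℂ) ^ (m₁ + 1) * ℓ * m₁ := by
    have h := h1 ⟨0, hs₁⟩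
    rw [Complex.conj_ofReal] at h
    exact mul_right_cancel₀ (Complex.ofReal_ne_zero.mpr (hc _)) h
  have k2 : (m₂ : ℂ) ^ 2 - p₁ = -((-1 : ℂ) ^ (m₂ + 1) * ℓ * m₂) := by
    have h := h2 ⟨0, hs₂⟩
    rw [hconj] at h
    exact mul_right_cancel₀ (hd ⟨0, hs₂⟩).1 (by rw [h]; ring)
  have hCD : (C : ℂ) + D = 1 := by exact_mod_cast hnorm
  have hm₁pos : (0 : ℝ) < m₁ := by exact_mod_cast hm₁
  have hm₂pos : (0 : ℝ) < m₂ := by exact_mod_cast hm₁.trans h12.le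
  have hsum : (m₁ : ℂ) + m₂ ≠ 0 := by exact_mod_cast (by omega : m₁ + m₂ ≠ 0)
  have hdiff : (m₂ : ℂ) - m₁ ≠ 0 := sub_ne_zero.mpr (by exact_mod_cast h12.ne')
  have hsq : (-1 : ℂ) ^ (m₁ + 1) * (-1 : ℂ) ^ (m₁ + 1) = 1 := by
    rw [← mul_pow]; simp
  have hmul : (-1 : ℂ) ^ (m₂ + 1) = (-1 : ℂ) ^ (m₁ + m₂) * (-1 : ℂ) ^ (m₁ + 1) := by
    rw [← pow_add, show m₁ + m₂ + (m₁ + 1) = 2 * m₁ + (m₂ + 1) by ring, pow_add _ (2 * m₁), pow_mul]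
    simp
  generalize (-1 : ℂ) ^ (m₁ + 1) = e at *
  rcases Nat.even_or_odd (m₁ + m₂) with hev | hodd
  · rw [hev.neg_one_pow, one_mul] at hmul
    rw [hmul] at hdef k2
    have hel : e * ℓ = m₁ - m₂ :=
      mul_right_cancel₀ hsum (by linear_combination k2 - k1)
    have hCval : (C : ℂ) * (m₁ + m₂) = m₁ := by
      linear_combination hel - e * hdef - (m₁ * C - m₂ * D) * hsq + m₂ * hCD
    have hCreal : C * (m₁ + m₂) = m₁ := by exact_mod_cast hCval
    refine ⟨hev, ?_, ?_, ?_, ?_⟩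
    · rw [eq_div_iff (by positivity), hCreal]
    · rw [hsumd, neg_inj, eq_div_iff hsum]
      linear_combination (m₁ + m₂ : ℂ) * hCD - hCval
    · linear_combination e * hel - ℓ * hsq
    · linear_combination -k1 - m₁ * hel
  · exfalso
    rw [hodd.neg_one_pow] at hmul
    rw [hmul] at hdef k2
    have hel : e * ℓ = m₁ + m₂ :=
      mul_right_cancel₀ hdiff (by linear_combination k1 - k2)
    have hzero : (m₁ : ℂ) * D + m₂ * C = 0 := by
      linear_combination
        e * hdef - hel + (m₁ * C + m₂ * D) * hsq + (m₁ + m₂ : ℂ) * hCD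
    have hzeroR : (m₁ : ℝ) * D + m₂ * C = 0 := by exact_mod_cast hzero
    have : 0 < (m₁ : ℝ) * D + m₂ * C := by positivity
    exact this.ne' hzeroR
end
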